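/- Let k ≥ 1, n = 2^k, and identify [n] with {0,1}^k. Let x ∈ {0,1}^n (indexed by {0,1}^k), let i ≠ j be elements of {0,1}^k, and let H_n be the n×n Hadamard matrix with entries H_n[a,i] = (−1)^{a·i}/√n for a,i ∈ {0,1}^k. Let ψ ∈ ℝ^n ⊗ ℝ^n be the unit vector ψ = ((−1)^{x_i} e_i ⊗ e_i + (−1)^{x_j} e_j ⊗ e_j)/√2, and let φ = (H_n ⊗ H_n) ψ. Then φ is a unit vector, and every pair (a,b) ∈ {0,1}^k × {0,1}^k with φ_{a,b} ≠ 0 satisfies (a·(i⊕j)) ⊕ (b·(i⊕j)) = x_i ⊕ x_j, where · denotes the inner product mod 2 on {0,1}^k and ⊕ is bitwise XOR. -/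

import Mathlib

open scoped Classical
open Finset

/-- Inner product mod 2 on `{0,1}^k`, as a Boolean. -/
def bdot {k : ℕ} (a b : Fin k → Bool) : Bool :=
  decide ((Finset.univ.filter fun t => a t && b t).card % 2 = 1)

/-- Bitwise XOR on `{0,1}^k`. -/
def bxor {k : ℕ} (a b : Fin k → Bool) : Fin k → Bool := fun t => xor (a t) (b t)

/-!
Up to normalisation, the amplitude `φ (a, b)` is `(-1)^{x_i + a·i + b·i} + (-1)^{x_j + a·j + b·j}`.
Two signs have a nonzero sum only if they agree, and comparing the exponents modulo 2 gives the
parity identity. Since the characters `a ↦ (-1)^{a·i}` are orthogonal, `H ⊗ H` is an isometry, so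
`φ` inherits the unit norm of `ψ`.
-/

open Matrix
open scoped Kronecker

section BoolSign

variable (R : Type*) [Ring R]

/-- The sign `(-1) ^ b` in `R`, the Boolean `b` being read as a bit. -/
def boolSign (b : Bool) : R := if b then -1 else 1

theorem boolSign_injective [NeZero (2 : R)] : Function.Injective (boolSign R) := by
  have one_ne_neg_one : (1 : R) ≠ -1 := fun h =>
    two_ne_zero (α := R) (by rw [← one_add_one_eq_two, ← eq_neg_iff_add_eq_zero, ← h])
  intro u v
  cases u <;> cases v <;> simp [boolSign, one_ne_neg_one, one_ne_neg_one.symm]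

theorem boolSign_xor (u v : Bool) : boolSign R (xor u v) = boolSign R u * boolSign R v := by
  cases u <;> cases v <;> simp [boolSign]

theorem boolSign_mul_self (u : Bool) : boolSign R u * boolSign R u = 1 := by
  cases u <;> simp [boolSign]

theorem boolSign_decide_mod_two (m : ℕ) : boolSign R (decide (m % 2 = 1)) = (-1) ^ m := by
  rcases Nat.mod_two_eq_zero_or_one m with hm | hm
  · simp [boolSign, hm, (Nat.even_iff.mpr hm).neg_one_pow]
  · simp [boolSign, hm, (Nat.odd_iff.mpr hm).neg_one_pow]

variable {R} in
theorem eq_of_boolSign_add_boolSign_ne_zero {u v : Bool}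
    (h : boolSign R u + boolSign R v ≠ 0) : u = v := by
  cases u <;> cases v <;> simp_all [boolSign]

end BoolSign

section Bdot

variable (R : Type*) [CommRing R] {k : ℕ}

theorem boolSign_bdot (a b : Fin k → Bool) :
    boolSign R (bdot a b) = ∏ t, boolSign R (a t && b t) := by
  rw [bdot, boolSign_decide_mod_two]
  simp only [boolSign, prod_ite, prod_const, one_pow, mul_one]

theorem bdot_bxor (a b c : Fin k → Bool) :
    bdot a (bxor b c) = xor (bdot a b) (bdot a c) := by
  apply boolSign_injective ℤ
  simp only [boolSign_xor, boolSign_bdot, bxor, Bool.and_xor_distrib_left, prod_mul_distrib]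

theorem sum_boolSign_bdot_eq_zero {d : Fin k → Bool} {t : Fin k} (ht : d t = true) :
    ∑ a, boolSign R (bdot a d) = 0 := by
  simp only [boolSign_bdot]
  rw [← Fintype.prod_sum fun s c => boolSign R (c && d s)]
  exact prod_eq_zero (mem_univ t) (by simp [ht, boolSign])

theorem sum_boolSign_bdot_mul_boolSign_bdot (i j : Fin k → Bool) :
    ∑ a, boolSign R (bdot a i) * boolSign R (bdot a j) = if i = j then 2 ^ k else 0 := by
  split_ifs with hij
  · simp [hij, boolSign_mul_self]
  · obtain ⟨t, ht⟩ := Function.ne_iff.mp hij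
    simp only [← boolSign_xor, ← bdot_bxor]
    exact sum_boolSign_bdot_eq_zero R (t := t) (by simpa [bxor] using ht)

end Bdot

/-- The normalised Hadamard (Walsh) matrix `H^{⊗k}`, of order `2 ^ k`, with rows and columns
indexed by bit strings. -/
noncomputable def walshMatrix (k : ℕ) : Matrix (Fin k → Bool) (Fin k → Bool) ℝ :=
  of fun a i => boolSign ℝ (bdot a i) / √(2 ^ k)

theorem walshMatrix_mem_orthogonalGroup (k : ℕ) :
    walshMatrix k ∈ orthogonalGroup (Fin k → Bool) ℝ := by
  rw [mem_orthogonalGroup_iff']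
  ext i j
  have sqrt_mul_sqrt : √(2 ^ k : ℝ) * √(2 ^ k) = 2 ^ k := Real.mul_self_sqrt (by positivity)
  simp only [mul_apply, transpose_apply, walshMatrix, of_apply, div_mul_div_comm, sqrt_mul_sqrt,
    ← sum_div, sum_boolSign_bdot_mul_boolSign_bdot, one_apply, ite_div, zero_div]
  rw [div_self (by positivity)]

theorem star_mulVec_dotProduct_mulVec {m n R : Type*} [Fintype m] [Fintype n] [DecidableEq n]
    [Semiring R] [StarRing R] {A : Matrix m n R} (hA : Aᴴ * A = 1) (v w : n → R) :
    star (A *ᵥ v) ⬝ᵥ A *ᵥ w = star v ⬝ᵥ w := by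
  rw [star_mulVec, dotProduct_mulVec, vecMul_vecMul, hA, vecMul_one]

section PhasedPair

variable {ι : Type*} [DecidableEq ι]

/-- The state `((-1)^{x_i} e_i ⊗ e_i + (-1)^{x_j} e_j ⊗ e_j) / √2` that the players share after
Alice has applied her phases and Bob has projected onto the pair `(i, j)` of his matching; tensors
are encoded as vectors indexed by pairs. -/
noncomputable def phasedPair (x : ι → Bool) (i j : ι) : ι × ι → ℝ :=
  (√2)⁻¹ • (boolSign ℝ (x i) • Pi.single (i, i) 1 + boolSign ℝ (x j) • Pi.single (j, j) 1)

variable [Fintype ι] (x : ι → Bool) {i j : ι}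

theorem phasedPair_dotProduct_self (hij : i ≠ j) : phasedPair x i j ⬝ᵥ phasedPair x i j = 1 := by
  have inv_sqrt_mul_inv_sqrt : (√2)⁻¹ * (√2)⁻¹ = (2⁻¹ : ℝ) := by
    rw [← mul_inv, Real.mul_self_sqrt zero_le_two]
  calc phasedPair x i j ⬝ᵥ phasedPair x i j
    _ = (√2)⁻¹ * (√2)⁻¹ *
        (boolSign ℝ (x i) * boolSign ℝ (x i) + boolSign ℝ (x j) * boolSign ℝ (x j)) := by
      simp only [phasedPair, smul_add, dotProduct_add, dotProduct_smul, dotProduct_single,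
        Pi.add_apply, Pi.smul_apply, Pi.single_eq_same, smul_eq_mul, mul_one, ne_eq,
        Prod.mk.injEq, hij, hij.symm, and_self, not_false_eq_true, Pi.single_eq_of_ne, mul_zero,
        add_zero, zero_add]
      ring
    _ = 1 := by
      rw [inv_sqrt_mul_inv_sqrt, boolSign_mul_self, boolSign_mul_self]
      norm_num

theorem kronecker_mulVec_phasedPair {m n : Type*} (A : Matrix m ι ℝ) (B : Matrix n ι ℝ)
    (a : m) (b : n) :
    ((A ⊗ₖ B) *ᵥ phasedPair x i j) (a, b) =
      (boolSign ℝ (x i) * (A a i * B b i) + boolSign ℝ (x j) * (A a j * B b j)) / √2 := by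
  simp [phasedPair, mulVec_smul, mulVec_add, div_eq_inv_mul, mul_add]

end PhasedPair

theorem walshMatrix_kronecker_mulVec_phasedPair {k : ℕ} (x : (Fin k → Bool) → Bool)
    (i j a b : Fin k → Bool) :
    ((walshMatrix k ⊗ₖ walshMatrix k) *ᵥ phasedPair x i j) (a, b) =
      (boolSign ℝ (xor (x i) (xor (bdot a i) (bdot b i))) +
        boolSign ℝ (xor (x j) (xor (bdot a j) (bdot b j)))) / (2 ^ k * √2) := by
  have sqrt_mul_sqrt : √(2 ^ k : ℝ) * √(2 ^ k) = 2 ^ k := Real.mul_self_sqrt (by positivity)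
  simp only [kronecker_mulVec_phasedPair, walshMatrix, of_apply, boolSign_xor,
    div_mul_div_comm _ √(2 ^ k), sqrt_mul_sqrt]
  ring

theorem xor_bdot_bxor_of_amplitude_ne_zero {k : ℕ} {x : (Fin k → Bool) → Bool}
    {i j a b : Fin k → Bool}
    (h : ((walshMatrix k ⊗ₖ walshMatrix k) *ᵥ phasedPair x i j) (a, b) ≠ 0) :
    xor (bdot a (bxor i j)) (bdot b (bxor i j)) = xor (x i) (x j) := by
  rw [walshMatrix_kronecker_mulVec_phasedPair] at h
  have phases_agree : xor (x i) (xor (bdot a i) (bdot b i)) =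
      xor (x j) (xor (bdot a j) (bdot b j)) :=
    eq_of_boolSign_add_boolSign_ne_zero (div_ne_zero_iff.mp h).1
  rw [bdot_bxor, bdot_bxor]
  revert phases_agree
  generalize x i = xi, x j = xj, bdot a i = ai, bdot a j = aj, bdot b i = bi, bdot b j = bj
  decide +revert

/-- With `n = 2^k`, `[n]` identified with `{0,1}^k`, `x ∈ {0,1}^n`,
`i ≠ j` in `{0,1}^k`, `H` the `n×n` Hadamard matrix `H[a,i] = (−1)^{a·i}/√n`,
`ψ = ((−1)^{x_i} e_i ⊗ e_i + (−1)^{x_j} e_j ⊗ e_j)/√2` and `φ = (H ⊗ H) ψ`: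
`φ` is a unit vector, and every `(a, b)` with `φ_{a,b} ≠ 0` satisfies
`(a·(i⊕j)) ⊕ (b·(i⊕j)) = x_i ⊕ x_j`. -/
theorem hidden_matching_nonlocal_quantum_strategy
    (k : ℕ) (hk : 1 ≤ k)
    (x : (Fin k → Bool) → Bool) (i j : Fin k → Bool) (hij : i ≠ j)
    (H : (Fin k → Bool) → (Fin k → Bool) → ℝ)
    (hH : H = fun a i => (if bdot a i then (-1 : ℝ) else 1) / Real.sqrt (2 ^ k))
    (ψ : (Fin k → Bool) × (Fin k → Bool) → ℝ)
    (hψ : ψ = fun p =>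
      ((if x i then (-1 : ℝ) else 1) * (if p.1 = i ∧ p.2 = i then 1 else 0)
        + (if x j then (-1 : ℝ) else 1) * (if p.1 = j ∧ p.2 = j then 1 else 0))
        / Real.sqrt 2)
    (φ : (Fin k → Bool) × (Fin k → Bool) → ℝ)
    (hφ : φ = fun q => ∑ p : (Fin k → Bool) × (Fin k → Bool),
      H q.1 p.1 * H q.2 p.2 * ψ p) :
    (∑ q : (Fin k → Bool) × (Fin k → Bool), φ q ^ 2) = 1 ∧
    ∀ a b : Fin k → Bool, φ (a, b) ≠ 0 →
      xor (bdot a (bxor i j)) (bdot b (bxor i j)) = xor (x i) (x j) := by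
  have hψ' : ψ = phasedPair x i j := by
    ext ⟨p, q⟩
    simp only [hψ, phasedPair, boolSign, Pi.smul_apply, Pi.add_apply, Pi.single_apply,
      Prod.mk.injEq, smul_eq_mul, div_eq_inv_mul]
  have hφ' : φ = (walshMatrix k ⊗ₖ walshMatrix k) *ᵥ phasedPair x i j := by
    rw [hφ, hH, hψ']
    rfl
  have isometry : (walshMatrix k ⊗ₖ walshMatrix k)ᴴ * (walshMatrix k ⊗ₖ walshMatrix k) = 1 :=
    (kronecker_mem_unitary (walshMatrix_mem_orthogonalGroup k)
      (walshMatrix_mem_orthogonalGroup k)).1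
  refine ⟨?_, fun a b hab => xor_bdot_bxor_of_amplitude_ne_zero (hφ' ▸ hab)⟩
  calc ∑ q, φ q ^ 2
    _ = φ ⬝ᵥ φ := by simp only [dotProduct, sq]
    _ = phasedPair x i j ⬝ᵥ phasedPair x i j := by
      rw [hφ']
      exact star_mulVec_dotProduct_mulVec isometry _ _
    _ = 1 := phasedPair_dotProduct_self x hij
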